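/- Fix r > 0 and s^0 ∈ ℝ^K. Define Model I by p^0 = q_r(s^0), s^t = s^{t−1} + c(p^{t−1}), p^t = q_r(s^t) for t ≥ 1; and define Model II by ŝ^0 = s^0, p̂^0 = q_r(ŝ^0), ŝ^t = (1 − 1/(t+1)) · ŝ^{t−1} + (1/(t+1)) · c(p̂^{t−1}), p̂^t = q_{r(t+1)}(ŝ^t) for t ≥ 1. Then the two models generate identical route choice sequences: p^t = p̂^t for all t ≥ 0 (indeed ŝ^t = s^t/(t+1) for all t ≥ 0). -/

import Mathlib

open Finset Filter Topology

/-!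
Logit choice sees only the product of its sensitivity and the costs, so sensitivity `r * (t + 1)`
applied to an average of `t + 1` scores is sensitivity `r` applied to their total. Multiplying the
averaging recursion of Model II by `t + 2` therefore turns it into the recursion of Model I.
-/

section Averaging

variable {𝕜 V X : Type*} [DivisionRing 𝕜] [AddCommGroup V] [Module 𝕜 V]

theorem smul_one_sub_one_div_smul_add {a : 𝕜} (ha : a ≠ 0) (x y : V) :
    a • ((1 - 1 / a) • x + (1 / a) • y) = (a - 1) • x + y := by
  rw [smul_add, smul_smul, smul_smul, mul_sub, mul_one, mul_one_div_cancel ha, one_smul]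

theorem succ_smul_average_eq_total [CharZero 𝕜] (f : ℕ → V → V) {s a : ℕ → V}
    (h_init : a 0 = s 0)
    (h_total : ∀ t, s (t + 1) = s t + f t (s t))
    (h_average : ∀ t, a (t + 1) = (1 - 1 / ((t : 𝕜) + 2)) • a t +
      (1 / ((t : 𝕜) + 2)) • f t (((t : 𝕜) + 1) • a t))
    (t : ℕ) : ((t : 𝕜) + 1) • a t = s t := by
  induction t with
  | zero => simpa using h_init
  | succ t ih =>
    have h_ne : (t : 𝕜) + 2 ≠ 0 := mod_cast (t + 1).succ_ne_zero
    have h_succ : ((t + 1 : ℕ) : 𝕜) + 1 = t + 2 := by norm_cast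
    have h_pred : (t : 𝕜) + 2 - 1 = t + 1 := by norm_num [add_sub_assoc]
    rw [h_succ, h_average, smul_one_sub_one_div_smul_add h_ne, h_pred, ih, h_total]

theorem stmt_14_general [CharZero 𝕜] (q : 𝕜 → V → X) (c : X → V) (r : 𝕜)
    (hq : ∀ (t : ℕ) (s : V), q (r * ((t : 𝕜) + 1)) s = q r (((t : 𝕜) + 1) • s))
    {sI sII : ℕ → V} {pI pII : ℕ → X}
    (h_init : sII 0 = sI 0)
    (hpI : ∀ t, pI t = q r (sI t))
    (hsI : ∀ t, sI (t + 1) = sI t + c (pI t))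
    (hpII : ∀ t, pII t = q (r * ((t : 𝕜) + 1)) (sII t))
    (hsII : ∀ t, sII (t + 1) = (1 - 1 / ((t : 𝕜) + 2)) • sII t +
      (1 / ((t : 𝕜) + 2)) • c (pII t)) :
    (∀ t, pII t = pI t) ∧ ∀ t, sII t = ((t : 𝕜) + 1)⁻¹ • sI t := by
  have h_scale (t : ℕ) : ((t : 𝕜) + 1) • sII t = sI t :=
    succ_smul_average_eq_total (fun _ s => c (q r s)) h_init
      (fun t => by rw [hsI, hpI]) (fun t => by rw [hsII, hpII, hq]) t
  refine ⟨fun t => ?_, fun t => ?_⟩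
  · rw [hpII, hq, h_scale, hpI]
  · rw [← h_scale, inv_smul_smul₀ t.cast_add_one_ne_zero]

end Averaging

section Logit

variable {W K : Type*} [Fintype K] [DecidableEq W]

/-- The logit choice rule `q_r(s)` on the routes `K`, with sensitivity `r` and route scores `s`,
normalised separately over each fibre of `ω` (the routes of one OD pair). -/
noncomputable def logitChoice (ω : K → W) (r : ℝ) (s : K → ℝ) (k : K) : ℝ :=
  Real.exp (-r * s k) / ∑ k' ∈ univ.filter (fun k' => ω k' = ω k), Real.exp (-r * s k')

theorem logitChoice_mul (ω : K → W) (r a : ℝ) (s : K → ℝ) :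
    logitChoice ω (r * a) s = logitChoice ω r (a • s) := by
  funext k
  simp only [logitChoice, Pi.smul_apply, smul_eq_mul, neg_mul, mul_assoc]

end Logit

theorem stmt_14
    {W K E : Type*} [Fintype W] [Fintype K] [Fintype E]
    [DecidableEq W] [DecidableEq E]
    [Nonempty W] [Nonempty K]
    (ω : K → W) (hω : Function.Surjective ω)
    (Λ : E → K → ℝ) (hΛ : ∀ e k, Λ e k = 0 ∨ Λ e k = 1)
    (d : W → ℝ) (hd : ∀ w, 0 < d w)
    (u : (E → ℝ) → (E → ℝ))
    (P : Set (K → ℝ))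
    (hP : P = {p : K → ℝ | (∀ k, 0 ≤ p k) ∧
      ∀ w, ∑ k ∈ Finset.univ.filter (fun k => ω k = w), p k = 1})
    (Λbar : E → K → ℝ) (hΛbar : ∀ e k, Λbar e k = d (ω k) * Λ e k)
    (c : (K → ℝ) → K → ℝ)
    (hc : ∀ p k, c p k = ∑ e, Λ e k * u (fun e' => ∑ k', Λbar e' k' * p k') e)
    (q : ℝ → (K → ℝ) → K → ℝ)
    (hq : ∀ (rr : ℝ) (ss : K → ℝ) (k : K),
      q rr ss k = Real.exp (-rr * ss k) /
        ∑ k' ∈ Finset.univ.filter (fun k' => ω k' = ω k), Real.exp (-rr * ss k'))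
    (r : ℝ) (hr : 0 < r) (s0 : K → ℝ)
    (sI pI sII pII : ℕ → K → ℝ)
    (hsI0 : sI 0 = s0)
    (hpI : ∀ t, pI t = q r (sI t))
    (hsI : ∀ t, sI (t + 1) = fun k => sI t k + c (pI t) k)
    (hsII0 : sII 0 = s0)
    (hpII : ∀ t, pII t = q (r * ((t : ℝ) + 1)) (sII t))
    (hsII : ∀ t, sII (t + 1) = fun k =>
      (1 - 1 / ((t : ℝ) + 2)) * sII t k + (1 / ((t : ℝ) + 2)) * c (pII t) k) :
    (∀ t, pII t = pI t) ∧ ∀ t k, sII t k = sI t k / ((t : ℝ) + 1) := by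
  obtain rfl : q = logitChoice ω := funext fun rr => funext fun ss => funext (hq rr ss)
  have ⟨h_choice, h_score⟩ := stmt_14_general (logitChoice ω) c r
    (fun t => logitChoice_mul ω r (t + 1)) (hsII0.trans hsI0.symm) hpI hsI hpII hsII
  exact ⟨h_choice, fun t k => (congrFun (h_score t) k).trans (div_eq_inv_mul _ _).symm⟩
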